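/- Suppose the quadrature nodes and weights satisfy the vanishing-moment condition. Then for every integer n ≥ 1 and every integer k with 0 ≤ k ≤ N − n, one has Σ_{j=1}^N ω_j z_j^k (z_j J_n(0) − I_n)^{-1} J_n(0) = O (the n×n zero matrix). -/

import Mathlib

noncomputable section
open Matrix

/-- The `n×n` Jordan block with eigenvalue `l`: diagonal entries `l`,
superdiagonal entries `1`, all other entries `0`. -/
def jordanBlock (n : ℕ) (l : ℂ) : Matrix (Fin n) (Fin n) ℂ :=
  Matrix.of fun p q : Fin n =>
    if (q : ℕ) = (p : ℕ) then l else if (q : ℕ) = (p : ℕ) + 1 then 1 else 0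

/-! For `a ^ n = 0`, the geometric series gives `(z a - 1)⁻¹ a = -∑_{m < n} z ^ m a ^ (m + 1)`.
After weighting by `ω_j z_j ^ k` and summing over `j`, the coefficient of `a ^ (m + 1)` is, up to
sign, the moment of order `k + m`; it vanishes for `m + 1 < n`, and the last power of `a` is
`a ^ n = 0`. -/

theorem ringInverse_sub_one_of_pow_eq_zero {A : Type*} [Ring A] {a : A} {n : ℕ} (ha : a ^ n = 0) :
    Ring.inverse (a - 1) = -∑ m ∈ Finset.range n, a ^ m := by
  have hright : (a - 1) * -∑ m ∈ Finset.range n, a ^ m = 1 := by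
    rw [mul_neg, mul_geom_sum, ha, zero_sub, neg_neg]
  have hleft : (-∑ m ∈ Finset.range n, a ^ m) * (a - 1) = 1 := by
    rw [neg_mul, geom_sum_mul, ha, zero_sub, neg_neg]
  exact Ring.inverse_unit ⟨a - 1, _, hright, hleft⟩

section Quadrature

variable {K A : Type*} [CommSemiring K] [Ring A] [Algebra K A] {a : A} {n : ℕ}

theorem ringInverse_smul_sub_one_mul_of_pow_eq_zero (ha : a ^ n = 0) (z : K) :
    Ring.inverse (z • a - 1) * a = -∑ m ∈ Finset.range n, z ^ m • a ^ (m + 1) := by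
  have hza : (z • a) ^ n = 0 := by rw [smul_pow, ha, smul_zero]
  simp only [ringInverse_sub_one_of_pow_eq_zero hza, neg_mul, Finset.sum_mul, smul_pow,
    smul_mul_assoc, pow_succ]

theorem sum_smul_ringInverse_mul_eq_neg_sum_moment_smul {ι : Type*} [Fintype ι] (ha : a ^ n = 0)
    (z ω : ι → K) (k : ℕ) :
    ∑ j, (ω j * z j ^ k) • (Ring.inverse (z j • a - 1) * a) =
      -∑ m ∈ Finset.range n, (∑ j, ω j * z j ^ (k + m)) • a ^ (m + 1) := by
  simp only [ringInverse_smul_sub_one_mul_of_pow_eq_zero ha, smul_neg, Finset.sum_neg_distrib,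
    Finset.smul_sum, Finset.sum_smul, smul_smul, mul_assoc, ← pow_add]
  rw [Finset.sum_comm]

theorem stmt_9_general {ι : Type*} [Fintype ι] {N k : ℕ} {z ω : ι → K}
    (hvm : ∀ i : ℕ, i + 2 ≤ N → ∑ j, ω j * z j ^ i = 0) (ha : a ^ n = 0) (hk : k + n ≤ N) :
    ∑ j, (ω j * z j ^ k) • (Ring.inverse (z j • a - 1) * a) = 0 := by
  rw [sum_smul_ringInverse_mul_eq_neg_sum_moment_smul ha, neg_eq_zero]
  refine Finset.sum_eq_zero fun m hm => ?_
  obtain hlt | rfl : m + 1 < n ∨ m + 1 = n :=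
    Nat.lt_or_eq_of_le (Finset.mem_range.mp hm)
  · rw [hvm (k + m) (by lia), zero_smul]
  · rw [ha, smul_zero]

end Quadrature

theorem pow_card_eq_zero_of_strictUpperTriangular {ι R : Type*} [Fintype ι] [LinearOrder ι]
    [CommRing R] {M : Matrix ι ι R} (hM : ∀ i j, j ≤ i → M i j = 0) :
    M ^ Fintype.card ι = 0 := by
  have hupper : M.IsUpperTriangular := fun i j hji => hM i j hji.le
  have hcharpoly : M.charpoly = Polynomial.X ^ Fintype.card ι := by
    simp [charpoly_of_isUpperTriangular M hupper, hM]
  simpa only [hcharpoly, map_pow, Polynomial.aeval_X] using aeval_self_charpoly M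

theorem jordanBlock_zero_apply_of_le {n : ℕ} {p q : Fin n} (h : q ≤ p) :
    jordanBlock n 0 p q = 0 := by
  have hsuper : (q : ℕ) ≠ p + 1 := by lia
  simp [jordanBlock, hsuper]

theorem jordanBlock_zero_pow_self (n : ℕ) : jordanBlock n 0 ^ n = 0 := by
  simpa only [Fintype.card_fin] using
    pow_card_eq_zero_of_strictUpperTriangular fun _ _ => jordanBlock_zero_apply_of_le (n := n)

/-- under the vanishing-moment condition, for every `n ≥ 1` and
`0 ≤ k ≤ N − n`, `∑_j ω_j z_j^k (z_j J_n(0) − I_n)⁻¹ J_n(0) = O`. -/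
theorem stmt_9 (N : ℕ) (z omega : Fin N → ℂ)
    (hvm : ∀ k : ℕ, k + 2 ≤ N → ∑ j, omega j * z j ^ k = 0)
    (n : ℕ) (hn : 1 ≤ n) (k : ℕ) (hk : k + n ≤ N) :
    ∑ j, (omega j * z j ^ k) •
        ((z j • jordanBlock n 0 - (1 : Matrix (Fin n) (Fin n) ℂ))⁻¹ * jordanBlock n 0) =
      (0 : Matrix (Fin n) (Fin n) ℂ) := by
  simpa only [nonsing_inv_eq_ringInverse] using
    stmt_9_general hvm (jordanBlock_zero_pow_self n) hk
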